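/- arXiv:1709.05728 — 3 statements merged into one kernel-verified Lean document; each statement's English description precedes it below -/
import Mathlib

section
/- Let R be a unital associative and commutative ring and let A be a unital associative R-algebra generated (as a unital R-algebra) by a set X. Let U be a two-sided ideal of A generated by a set S, and let W be the two-sided ideal of A generated by { [u, a_1, a_2] | u ∈ U, a_1, a_2 ∈ A }. Then W is generated, as a two-sided ideal of A, by the following elements, where s ranges over S and x_1, x_2, x_3, x_4, x_5 range over X: (1) [s, x_1, x_2]; (2) s[x_1, x_2, x_3]; (3) [s, x_1][x_2, x_3, x_4]; (4) [s, x_1][x_2, x_3] + [s, x_2][x_1, x_3]; (5) s([x_1, x_2][x_3, x_4] + [x_1, x_3][x_2, x_4]). -/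
/-! The five families generate an ideal `I`, and `W = I` is proved by two inclusions.

`I ≤ W`. Expanding `[ua, b, c]` gives `[u, b][a, c] + [u, c][a, b] + u[a, b, c] ∈ W`. Hence
`u[a, b, c]` is, modulo `W`, symmetric in `b, c` and antisymmetric in `a, b`, and the Jacobi identity
forces it to vanish (`mul_cm_cm_eq_zero`). Applied to `[s, x] ∈ U` this also gives the third family, and
the last two follow by expanding `[u, ab, c]` and `u[aa', b, c]`.

`W ≤ I`. Work in `A ⧸ I`. For `s ∈ S` the elements `[s, x]` are central, so
`N = {v | s v = 0 and [s, x] v = 0 for all x ∈ X}` is a two-sided ideal. It contains all `[x, y, z]`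
and `[x, y][z, w] + [x, z][y, w]` with entries in `X`, and these relations make every commutator
of `(A ⧸ I) ⧸ N` central (`cm_cm_eq_zero_of_gen`), so `s[a, b, c] = 0` for arbitrary `a, b, c`. An
induction on `a` then gives `[s, a, b] = 0`. Finally, the elements `t` with `[t, a, b] = 0` and
`t[a, b, c] = 0` for all `a, b, c` form a two-sided ideal, which contains `S`, hence `U`. -/

/-- The commutator `[a, b] = a * b - b * a`. -/
def cm {A : Type*} [Ring A] (a b : A) : A := a * b - b * a

/-! ### Algebras in which the commutators of generators satisfy the Grassmann relations -/

section Generation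

variable {R B : Type*} [CommRing R] [Ring B] [Algebra R B] {X : Set B}

lemma cm_smul_left (r : R) (a b : B) : cm (r • a) b = r • cm a b := by
  simp [cm, smul_sub]

lemma cm_smul_right (r : R) (a b : B) : cm a (r • b) = r • cm a b := by
  simp [cm, smul_sub]

lemma cm_add_left (a b c : B) : cm (a + b) c = cm a c + cm b c := by
  simp only [cm]; noncomm_ring

lemma cm_add_right (a b c : B) : cm a (b + c) = cm a b + cm a c := by
  simp only [cm]; noncomm_ring

lemma cm_zero_left (a : B) : cm 0 a = 0 := by simp [cm]

lemma cm_one_left (a : B) : cm 1 a = 0 := by simp [cm]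

lemma cm_one_right (a : B) : cm a 1 = 0 := by simp [cm]

lemma cm_mul_left (a b c : B) : cm (a * b) c = a * cm b c + cm a c * b := by
  simp only [cm]; noncomm_ring

lemma cm_mul_right (a b c : B) : cm a (b * c) = b * cm a c + cm a b * c := by
  simp only [cm]; noncomm_ring

/-- To prove a linear property on an algebra generated by `X`, it is enough to check that it holds
at `1` and is stable under right multiplication by elements of `X`. -/
lemma gen_induction (hX : Algebra.adjoin R X = ⊤) (p : B → Prop) (one : p 1)
    (smul : ∀ (r : R) a, p a → p (r • a)) (add : ∀ a b, p a → p b → p (a + b))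
    (mul : ∀ a, p a → ∀ x ∈ X, p (a * x)) (a : B) : p a := by
  have key : ∀ b : B, ∀ a, p a → p (a * b) := by
    intro b
    have hb : b ∈ Algebra.adjoin R X := by rw [hX]; trivial
    induction hb using Algebra.adjoin_induction with
    | mem x hx => exact fun a ha => mul a ha x hx
    | algebraMap r =>
      intro a ha
      rw [← Algebra.commutes, ← Algebra.smul_def]
      exact smul r a ha
    | add b c _ _ hb hc =>
      intro a ha
      rw [mul_add]
      exact add _ _ (hb a ha) (hc a ha)
    | mul b c _ _ hb hc =>
      intro a ha
      rw [← mul_assoc]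
      exact hc _ (hb a ha)
  simpa using key a 1 one

lemma central_of_gen (hX : Algebra.adjoin R X = ⊤) {c : B} (h : ∀ x ∈ X, cm c x = 0) (a : B) :
    cm c a = 0 := by
  refine gen_induction hX (fun a => cm c a = 0) (cm_one_right c) ?_ ?_ ?_ a
  · intro r a ha
    rw [cm_smul_right, ha, smul_zero]
  · intro a b ha hb
    rw [cm_add_right, ha, hb, add_zero]
  · intro a ha x hx
    rw [cm_mul_right, ha, h x hx, mul_zero, zero_mul, add_zero]

/-- The classical generators of the T-ideal of `[a, b, c]`: the two families of relations on
generators make every commutator central. -/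
lemma cm_cm_eq_zero_of_gen (hX : Algebra.adjoin R X = ⊤)
    (h3 : ∀ x ∈ X, ∀ y ∈ X, ∀ z ∈ X, cm (cm x y) z = 0)
    (h4 : ∀ x ∈ X, ∀ y ∈ X, ∀ z ∈ X, ∀ w ∈ X, cm x y * cm z w + cm x z * cm y w = 0)
    (a b c : B) : cm (cm a b) c = 0 := by
  have key : ∀ a : B, ∀ y ∈ X, (∀ b, cm (cm a y) b = 0) ∧
      ∀ x ∈ X, ∀ z ∈ X, cm a y * cm x z + cm a z * cm x y = 0 := by
    intro a
    refine gen_induction hX (fun a => ∀ y ∈ X, (∀ b, cm (cm a y) b = 0) ∧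
      ∀ x ∈ X, ∀ z ∈ X, cm a y * cm x z + cm a z * cm x y = 0) ?_ ?_ ?_ ?_ a
    · intro y _
      simp [cm_one_left, cm_zero_left]
    · intro r a ha y hy
      refine ⟨fun b => ?_, fun x hx z hz => ?_⟩
      · rw [cm_smul_left, cm_smul_left, (ha y hy).1, smul_zero]
      · rw [cm_smul_left, cm_smul_left, smul_mul_assoc, smul_mul_assoc, ← smul_add,
          (ha y hy).2 x hx z hz, smul_zero]
    · intro a b ha hb y hy
      refine ⟨fun c => ?_, fun x hx z hz => ?_⟩
      · rw [cm_add_left, cm_add_left, (ha y hy).1, (hb y hy).1, add_zero]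
      · have e1 := (ha y hy).2 x hx z hz
        have e2 := (hb y hy).2 x hx z hz
        rw [cm_add_left, cm_add_left]
        linear_combination (norm := noncomm_ring) e1 + e2
    · intro a ha x₀ hx₀ y hy
      refine ⟨fun b => central_of_gen hX (fun z hz => ?_) b, fun x hx z hz => ?_⟩
      · have e1 := h3 x₀ hx₀ y hy z hz
        have e2 := (ha y hy).1 z
        have e3 := (ha y hy).2 x₀ hx₀ z hz
        rw [cm_mul_left, cm_add_left, cm_mul_left, cm_mul_left, e1, e2]
        linear_combination (norm := noncomm_ring) e3
      · have e1 := h4 x₀ hx₀ y hy z hz x hx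
        have e2 := (ha y hy).2 x hx z hz
        have c1 := (ha y hy).1 x₀
        have c2 := (ha z hz).1 x₀
        rw [cm_mul_left, cm_mul_left]
        have s1 : cm z x = - cm x z := by simp [cm]
        have s2 : cm y x = - cm x y := by simp [cm]
        rw [s1, s2] at e1
        simp only [cm] at c1 c2
        simp only [cm] at *
        linear_combination (norm := noncomm_ring) -(a * e1) + x₀ * e2
          + c1 * (x * z - z * x) + c2 * (x * y - y * x)
  -- `[a, b, y] = [a, y, b] + [a, [b, y]]`, and `[a, y]`, `[b, y]` are central.
  refine central_of_gen hX (fun y hy => ?_) c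
  have e1 := (key a y hy).1 b
  have e2 := (key b y hy).1 a
  simp only [cm] at *
  linear_combination (norm := noncomm_ring) e1 - e2

end Generation

/-! ### From relations on generators to relations on the whole algebra -/

section Relations

variable {R B : Type*} [CommRing R] [Ring B] [Algebra R B] {X : Set B}

/-- The right annihilator of the left ideal generated by `s` and the `[s, x]`, as a two-sided ideal; it
is one as soon as the elements `[s, x]` are central. -/
def annIdeal (hX : Algebra.adjoin R X = ⊤) (s : B)
    (h : ∀ x ∈ X, ∀ b, cm (cm s x) b = 0) : TwoSidedIdeal B :=
  TwoSidedIdeal.mk' {v | s * v = 0 ∧ ∀ x ∈ X, cm s x * v = 0}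
    (by simp)
    (by
      rintro v w ⟨hv, hv'⟩ ⟨hw, hw'⟩
      refine ⟨by rw [mul_add, hv, hw, add_zero], fun x hx => ?_⟩
      rw [mul_add, hv' x hx, hw' x hx, add_zero])
    (by
      rintro v ⟨hv, hv'⟩
      refine ⟨by rw [mul_neg, hv, neg_zero], fun x hx => ?_⟩
      rw [mul_neg, hv' x hx, neg_zero])
    (by
      intro a v hv
      have hc : ∀ a v : B, (∀ x ∈ X, cm s x * v = 0) → ∀ x ∈ X, cm s x * (a * v) = 0 := by
        intro a v hv x hx
        have e1 := h x hx a
        have e2 := hv x hx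
        rw [cm] at e1
        linear_combination (norm := noncomm_ring) e1 * v + a * e2
      refine ⟨?_, hc a v hv.2⟩
      suffices key : ∀ w, (s * w = 0 ∧ ∀ x ∈ X, cm s x * w = 0) → s * (a * w) = 0 from key v hv
      refine gen_induction hX
        (fun a => ∀ v, (s * v = 0 ∧ ∀ x ∈ X, cm s x * v = 0) → s * (a * v) = 0) ?_ ?_ ?_ ?_ a
      · rintro v ⟨hv, -⟩
        simpa using hv
      · intro r a ha v hv
        rw [smul_mul_assoc, mul_smul_comm, ha v hv, smul_zero]
      · intro a b ha hb v hv
        rw [add_mul, mul_add, ha v hv, hb v hv, add_zero]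
      · intro a ha x hx v hv
        rw [mul_assoc]
        refine ha _ ⟨?_, hc x v hv.2⟩
        have e1 := hv.1
        have e2 := hv.2 x hx
        rw [cm] at e2
        linear_combination (norm := noncomm_ring) x * e1 + e2)
    (by
      rintro v a ⟨hv, hv'⟩
      refine ⟨by rw [← mul_assoc, hv, zero_mul], fun x hx => ?_⟩
      rw [← mul_assoc, hv' x hx, zero_mul])

lemma mem_annIdeal (hX : Algebra.adjoin R X = ⊤) (s : B)
    (h : ∀ x ∈ X, ∀ b, cm (cm s x) b = 0) (v : B) :
    v ∈ annIdeal hX s h ↔ s * v = 0 ∧ ∀ x ∈ X, cm s x * v = 0 := by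
  simp [annIdeal, TwoSidedIdeal.mem_mk']

lemma mk_eq_zero_iff (I : TwoSidedIdeal B) (b : B) :
    (I.ringCon.mk' b : I.ringCon.Quotient) = 0 ↔ b ∈ I := by
  rw [← TwoSidedIdeal.mem_ker, TwoSidedIdeal.ker_ringCon_mk']

lemma mk_cm (I : TwoSidedIdeal B) (a b : B) :
    I.ringCon.mk' (cm a b) = cm (I.ringCon.mk' a) (I.ringCon.mk' b) := by
  simp [cm]

lemma adjoin_mk (I : TwoSidedIdeal B) (hX : Algebra.adjoin R X = ⊤) :
    Algebra.adjoin R (I.ringCon.mk' '' X) = ⊤ := by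
  let f : B →ₐ[R] I.ringCon.Quotient := { I.ringCon.mk' with commutes' := fun _ => rfl }
  have hf : Function.Surjective f := I.ringCon.mk'_surjective
  have h := AlgHom.map_adjoin f X
  rw [hX, Algebra.map_top, (AlgHom.range_eq_top f).2 hf] at h
  exact h.symm

/-- If `s` satisfies the five families of relations on the generators, it satisfies the
general ones. -/
lemma rels_of_gen (hX : Algebra.adjoin R X = ⊤) (s : B)
    (h1 : ∀ x ∈ X, ∀ y ∈ X, cm (cm s x) y = 0)
    (h2 : ∀ x ∈ X, ∀ y ∈ X, ∀ z ∈ X, s * cm (cm x y) z = 0)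
    (h3 : ∀ x ∈ X, ∀ y ∈ X, ∀ z ∈ X, ∀ w ∈ X, cm s x * cm (cm y z) w = 0)
    (h4 : ∀ x ∈ X, ∀ y ∈ X, ∀ z ∈ X, cm s x * cm y z + cm s y * cm x z = 0)
    (h5 : ∀ x ∈ X, ∀ y ∈ X, ∀ z ∈ X, ∀ w ∈ X, s * (cm x y * cm z w + cm x z * cm y w) = 0) :
    (∀ a b, cm (cm s a) b = 0) ∧ ∀ a b c, s * cm (cm a b) c = 0 := by
  have hc : ∀ x ∈ X, ∀ b, cm (cm s x) b = 0 := fun x hx => central_of_gen hX (h1 x hx)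
  set N := annIdeal hX s hc with hN
  have hmem : ∀ v, v ∈ N ↔ s * v = 0 ∧ ∀ x ∈ X, cm s x * v = 0 := mem_annIdeal hX s hc
  have hall : ∀ a b c, cm (cm a b) c ∈ N := by
    intro a b c
    rw [← mk_eq_zero_iff, mk_cm, mk_cm]
    apply cm_cm_eq_zero_of_gen (adjoin_mk N hX)
    · rintro _ ⟨x, hx, rfl⟩ _ ⟨y, hy, rfl⟩ _ ⟨z, hz, rfl⟩
      rw [← mk_cm, ← mk_cm, mk_eq_zero_iff, hmem]
      exact ⟨h2 x hx y hy z hz, fun x' hx' => h3 x' hx' x hx y hy z hz⟩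
    · rintro _ ⟨x, hx, rfl⟩ _ ⟨y, hy, rfl⟩ _ ⟨z, hz, rfl⟩ _ ⟨w, hw, rfl⟩
      simp only [← mk_cm, ← map_mul, ← map_add]
      rw [mk_eq_zero_iff, hmem]
      refine ⟨h5 x hx y hy z hz w hw, fun t ht => ?_⟩
      -- `[s, t][x, y]` changes sign under every transposition of `t, x, y`, and `[s, x]`, `[s, y]`,
      -- `[s, z]` are central, so they can be moved next to either commutator. Each `aᵢ` below
      -- exchanges two entries and each `kᵢ` moves a central factor; together they exchange
      -- `y` and `z` in `[s, t][x, y][z, w]`.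
      have a1 := h4 t ht x hx y hy
      have a2 := h4 x hx z hz w hw
      have a3 := h4 t ht z hz y hy
      have a4 := h4 t ht y hy z hz
      have a5 := h4 y hy x hx w hw
      have a6 := h4 t ht x hx z hz
      have k1 := hc x hx (cm t y)
      have k2 := hc z hz (cm t y)
      have k3 := hc y hy (cm t z)
      have k4 := hc x hx (cm t z)
      have s1 : cm z y = - cm y z := by simp [cm]
      rw [s1] at a3
      rw [cm] at k1 k2 k3 k4
      linear_combination (norm := noncomm_ring) a1 * cm z w - k1 * cm z w - cm t y * a2
        - k2 * cm x w + a3 * cm x w + a4 * cm x w - k3 * cm x w - cm t z * a5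
        - k4 * cm y w + a6 * cm y w
  have hs : ∀ a b c, s * cm (cm a b) c = 0 := fun a b c => ((hmem _).1 (hall a b c)).1
  -- `[s, a]` kills `N`, because `s` and `s a` do.
  have hsa : ∀ d a b c, cm s d * cm (cm a b) c = 0 := by
    intro d a b c
    have e1 := ((hmem _).1 (hall a b c)).1
    have e2 := ((hmem _).1 (N.mul_mem_left d _ (hall a b c))).1
    rw [cm.eq_def s d]
    linear_combination (norm := noncomm_ring) e2 - d * e1
  refine ⟨fun a b => ?_, hs⟩
  have key : ∀ a, (∀ b, cm (cm s a) b = 0) ∧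
      ∀ x ∈ X, ∀ y ∈ X, cm s x * cm a y + cm s a * cm x y = 0 := by
    intro a
    refine gen_induction hX (fun a => (∀ b, cm (cm s a) b = 0) ∧
      ∀ x ∈ X, ∀ y ∈ X, cm s x * cm a y + cm s a * cm x y = 0) ?_ ?_ ?_ ?_ a
    · simp [cm_one_left, cm_one_right, cm_zero_left]
    · rintro r a ⟨ha, ha'⟩
      refine ⟨fun b => ?_, fun x hx y hy => ?_⟩
      · rw [cm_smul_right, cm_smul_left, ha, smul_zero]
      · rw [cm_smul_left, cm_smul_right, smul_mul_assoc, mul_smul_comm, ← smul_add,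
          ha' x hx y hy, smul_zero]
    · rintro a b ⟨ha, ha'⟩ ⟨hb, hb'⟩
      refine ⟨fun c => ?_, fun x hx y hy => ?_⟩
      · rw [cm_add_right, cm_add_left, ha, hb, add_zero]
      · rw [cm_add_left, cm_add_right]
        linear_combination (norm := noncomm_ring) ha' x hx y hy + hb' x hx y hy
    · rintro a ⟨ha, ha'⟩ x₀ hx₀
      refine ⟨fun b => central_of_gen hX (fun y hy => ?_) b, fun x hx y hy => ?_⟩
      · have e1 := hc x₀ hx₀ y
        have e2 := ha y
        have e3 := ha' x₀ hx₀ y hy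
        have e4 := hc x₀ hx₀ (cm a y)
        rw [cm] at e4
        rw [cm_mul_right, cm_add_left, cm_mul_left, cm_mul_left, e1, e2]
        linear_combination (norm := noncomm_ring) e3 - e4
      · have e1 := h4 x hx x₀ hx₀ y hy
        have e2 := ha' x hx y hy
        have e3 := hc x hx a
        have e4 := hsa a x y x₀
        rw [cm] at e3
        rw [cm.eq_def (cm x y) x₀] at e4
        rw [cm_mul_left, cm_mul_right]
        linear_combination (norm := noncomm_ring) a * e1 + e2 * x₀ + e3 * cm x₀ y - e4
  exact (key a).1 b

end Relations

/-! ### Identities for elements with `[t, a, b] = 0` -/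

section Ideal

variable {B : Type*} [Ring B]

/-- `[t, a][b, c]` is antisymmetric in `a, b`: expand `[t, ab, c] = 0`. -/
lemma cm_mul_cm_swap {t : B} (h : ∀ a b, cm (cm t a) b = 0) (a b c : B) :
    cm t a * cm b c + cm t b * cm a c = 0 := by
  have e1 := h (a * b) c
  have e2 := h b (cm a c)
  rw [cm] at e2
  rw [cm_mul_right, cm_add_left, cm_mul_left, cm_mul_left, h, h] at e1
  linear_combination (norm := noncomm_ring) e1 + e2

lemma cm_cm_right_eq_zero {t : B} (h : ∀ a b, cm (cm t a) b = 0) (a b : B) :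
    cm t (cm a b) = 0 := by
  have e1 := h a b
  have e2 := h b a
  simp only [cm] at *
  linear_combination (norm := noncomm_ring) e1 - e2

lemma cm_cm_mul (a b c d : B) : cm (cm (a * b) c) d =
    a * cm (cm b c) d + cm a d * cm b c + cm a c * cm b d + cm (cm a c) d * b := by
  simp only [cm]; noncomm_ring

/-- The elements `t` with `[t, a, b] = 0` and `t[a, b, c] = 0` for all `a, b, c`. -/
def relIdeal (B : Type*) [Ring B] : TwoSidedIdeal B :=
  TwoSidedIdeal.mk' {t | (∀ a b, cm (cm t a) b = 0) ∧ ∀ a b c, t * cm (cm a b) c = 0}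
    (by simp [cm_zero_left])
    (by
      rintro t u ⟨ht, ht'⟩ ⟨hu, hu'⟩
      refine ⟨fun a b => ?_, fun a b c => ?_⟩
      · rw [cm_add_left, cm_add_left, ht, hu, add_zero]
      · rw [add_mul, ht', hu', add_zero])
    (by
      rintro t ⟨ht, ht'⟩
      refine ⟨fun a b => ?_, fun a b c => ?_⟩
      · have e := ht a b
        simp only [cm] at *
        linear_combination (norm := noncomm_ring) -e
      · rw [neg_mul, ht', neg_zero])
    (by
      rintro d t ⟨ht, ht'⟩
      refine ⟨fun a b => ?_, fun a b c => ?_⟩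
      · have e1 := ht a (cm d b)
        have e2 := ht b (cm d a)
        have e3 := cm_mul_cm_swap ht a b d
        have e4 := cm_cm_right_eq_zero ht (cm d a) b
        have e5 := ht' d a b
        have s1 : cm b d = - cm d b := by simp [cm]
        have s2 : cm a d = - cm d a := by simp [cm]
        rw [s1, s2] at e3
        rw [cm] at e1 e2 e4
        rw [cm_cm_mul, ht]
        linear_combination (norm := noncomm_ring) -e1 - e2 - e3 - e4 + e5
      · rw [mul_assoc, ht', mul_zero])
    (by
      rintro t d ⟨ht, ht'⟩
      refine ⟨fun a b => ?_, fun a b c => ?_⟩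
      · have e3 := cm_mul_cm_swap ht a b d
        have s1 : cm b d = - cm d b := by simp [cm]
        have s2 : cm a d = - cm d a := by simp [cm]
        rw [s1, s2] at e3
        rw [cm_cm_mul, ht, ht']
        linear_combination (norm := noncomm_ring) -e3
      · have e1 := cm_mul_cm_swap ht d (cm a b) c
        have e2 := ht' a b c
        rw [cm_cm_right_eq_zero ht, zero_mul, add_zero] at e1
        rw [cm.eq_def t d] at e1
        linear_combination (norm := noncomm_ring) e1 + d * e2)

lemma mem_relIdeal (t : B) : t ∈ relIdeal B ↔
    (∀ a b, cm (cm t a) b = 0) ∧ ∀ a b c, t * cm (cm a b) c = 0 := by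
  simp [relIdeal, TwoSidedIdeal.mem_mk']

/-- If `[v, b, c] = 0` for all `v` in `u B`, then `u[a, b, c]` is antisymmetric in `a, b` and
symmetric in `b, c`, so the Jacobi identity kills it. -/
lemma mul_cm_cm_eq_zero {u : B} (h : ∀ d a b, cm (cm (u * d) a) b = 0) (a b c : B) :
    u * cm (cm a b) c = 0 := by
  have h0 : ∀ a b, cm (cm u a) b = 0 := fun a b => by simpa using h 1 a b
  have E : ∀ a b c, u * cm (cm a b) c + cm u c * cm a b + cm u b * cm a c = 0 := by
    intro a b c
    have e := h a b c
    rw [cm_cm_mul, h0] at e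
    linear_combination (norm := noncomm_ring) e
  have sym : ∀ a b c, u * cm (cm a b) c = u * cm (cm a c) b := by
    intro a b c
    linear_combination (norm := noncomm_ring) E a b c - E a c b
  have anti : ∀ a b c, u * cm (cm a b) c = - (u * cm (cm b a) c) := by
    intro a b c
    simp only [cm]; noncomm_ring
  have jac : u * cm (cm a b) c + u * cm (cm b c) a + u * cm (cm c a) b = 0 := by
    simp only [cm]; noncomm_ring
  rw [sym b c a, anti b a c, anti c a b, sym a c b] at jac
  linear_combination (norm := noncomm_ring) -jac

end Ideal



/-! ### The two inclusions -/

theorem stmt_3 {R A : Type*} [CommRing R] [Ring A] [Algebra R A]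
    (X : Set A) (hX : Algebra.adjoin R X = ⊤)
    (S : Set A) (U : TwoSidedIdeal A) (hU : U = TwoSidedIdeal.span S)
    (W : TwoSidedIdeal A)
    (hW : W = TwoSidedIdeal.span {w | ∃ u ∈ U, ∃ a₁ a₂ : A, w = cm (cm u a₁) a₂}) :
    W = TwoSidedIdeal.span (
      {a | ∃ s ∈ S, ∃ x₁ ∈ X, ∃ x₂ ∈ X, a = cm (cm s x₁) x₂} ∪
      {a | ∃ s ∈ S, ∃ x₁ ∈ X, ∃ x₂ ∈ X, ∃ x₃ ∈ X, a = s * cm (cm x₁ x₂) x₃} ∪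
      {a | ∃ s ∈ S, ∃ x₁ ∈ X, ∃ x₂ ∈ X, ∃ x₃ ∈ X, ∃ x₄ ∈ X,
        a = cm s x₁ * cm (cm x₂ x₃) x₄} ∪
      {a | ∃ s ∈ S, ∃ x₁ ∈ X, ∃ x₂ ∈ X, ∃ x₃ ∈ X,
        a = cm s x₁ * cm x₂ x₃ + cm s x₂ * cm x₁ x₃} ∪
      {a | ∃ s ∈ S, ∃ x₁ ∈ X, ∃ x₂ ∈ X, ∃ x₃ ∈ X, ∃ x₄ ∈ X,
        a = s * (cm x₁ x₂ * cm x₃ x₄ + cm x₁ x₃ * cm x₂ x₄)}) := by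
  subst hU hW
  apply le_antisymm
  · set I := TwoSidedIdeal.span (
      {a | ∃ s ∈ S, ∃ x₁ ∈ X, ∃ x₂ ∈ X, a = cm (cm s x₁) x₂} ∪
      {a | ∃ s ∈ S, ∃ x₁ ∈ X, ∃ x₂ ∈ X, ∃ x₃ ∈ X, a = s * cm (cm x₁ x₂) x₃} ∪
      {a | ∃ s ∈ S, ∃ x₁ ∈ X, ∃ x₂ ∈ X, ∃ x₃ ∈ X, ∃ x₄ ∈ X,
        a = cm s x₁ * cm (cm x₂ x₃) x₄} ∪
      {a | ∃ s ∈ S, ∃ x₁ ∈ X, ∃ x₂ ∈ X, ∃ x₃ ∈ X,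
        a = cm s x₁ * cm x₂ x₃ + cm s x₂ * cm x₁ x₃} ∪
      {a | ∃ s ∈ S, ∃ x₁ ∈ X, ∃ x₂ ∈ X, ∃ x₃ ∈ X, ∃ x₄ ∈ X,
        a = s * (cm x₁ x₂ * cm x₃ x₄ + cm x₁ x₃ * cm x₂ x₄)}) with hI
    have hS : TwoSidedIdeal.span S ≤ (relIdeal I.ringCon.Quotient).comap I.ringCon.mk' := by
      rw [TwoSidedIdeal.span_le]
      intro s hs
      rw [SetLike.mem_coe, TwoSidedIdeal.mem_comap, mem_relIdeal]
      apply rels_of_gen (adjoin_mk I hX)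
      · rintro _ ⟨x, hx, rfl⟩ _ ⟨y, hy, rfl⟩
        simp only [← mk_cm]
        rw [mk_eq_zero_iff]
        exact TwoSidedIdeal.subset_span
          (Or.inl (Or.inl (Or.inl (Or.inl ⟨s, hs, x, hx, y, hy, rfl⟩))))
      · rintro _ ⟨x, hx, rfl⟩ _ ⟨y, hy, rfl⟩ _ ⟨z, hz, rfl⟩
        simp only [← mk_cm, ← map_mul]
        rw [mk_eq_zero_iff]
        exact TwoSidedIdeal.subset_span
          (Or.inl (Or.inl (Or.inl (Or.inr ⟨s, hs, x, hx, y, hy, z, hz, rfl⟩))))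
      · rintro _ ⟨x, hx, rfl⟩ _ ⟨y, hy, rfl⟩ _ ⟨z, hz, rfl⟩ _ ⟨w, hw, rfl⟩
        simp only [← mk_cm, ← map_mul]
        rw [mk_eq_zero_iff]
        exact TwoSidedIdeal.subset_span
          (Or.inl (Or.inl (Or.inr ⟨s, hs, x, hx, y, hy, z, hz, w, hw, rfl⟩)))
      · rintro _ ⟨x, hx, rfl⟩ _ ⟨y, hy, rfl⟩ _ ⟨z, hz, rfl⟩
        simp only [← mk_cm, ← map_mul, ← map_add]
        rw [mk_eq_zero_iff]
        exact TwoSidedIdeal.subset_span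
          (Or.inl (Or.inr ⟨s, hs, x, hx, y, hy, z, hz, rfl⟩))
      · rintro _ ⟨x, hx, rfl⟩ _ ⟨y, hy, rfl⟩ _ ⟨z, hz, rfl⟩ _ ⟨w, hw, rfl⟩
        simp only [← mk_cm, ← map_mul, ← map_add]
        rw [mk_eq_zero_iff]
        exact TwoSidedIdeal.subset_span
          (Or.inr ⟨s, hs, x, hx, y, hy, z, hz, w, hw, rfl⟩)
    rw [TwoSidedIdeal.span_le]
    rintro _ ⟨u, hu, a, b, rfl⟩
    have h := hS hu
    rw [TwoSidedIdeal.mem_comap, mem_relIdeal] at h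
    rw [SetLike.mem_coe, ← mk_eq_zero_iff, mk_cm, mk_cm]
    exact h.1 _ _
  · set U := TwoSidedIdeal.span S with hU
    set W := TwoSidedIdeal.span {w | ∃ u ∈ U, ∃ a₁ a₂ : A, w = cm (cm u a₁) a₂} with hW
    set π := W.ringCon.mk' with hπ
    have hπc : ∀ a b, π (cm a b) = cm (π a) (π b) := mk_cm W
    have hπs : Function.Surjective π := W.ringCon.mk'_surjective
    have g1 : ∀ u ∈ U, ∀ a b, cm (cm (π u) a) b = 0 := by
      intro u hu a b
      obtain ⟨a, rfl⟩ := hπs a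
      obtain ⟨b, rfl⟩ := hπs b
      rw [hπ, ← mk_cm, ← mk_cm, mk_eq_zero_iff]
      exact TwoSidedIdeal.subset_span ⟨u, hu, a, b, rfl⟩
    have g2 : ∀ u ∈ U, ∀ a b c, π u * cm (cm a b) c = 0 := by
      intro u hu
      refine mul_cm_cm_eq_zero fun d a b => ?_
      obtain ⟨d, rfl⟩ := hπs d
      rw [← map_mul]
      exact g1 _ (U.mul_mem_right _ _ hu) a b
    have hSU : ∀ s ∈ S, s ∈ U := fun s hs => TwoSidedIdeal.subset_span hs
    rw [TwoSidedIdeal.span_le]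
    rintro _ ((((⟨s, hs, x, hx, y, hy, rfl⟩ | ⟨s, hs, x, hx, y, hy, z, hz, rfl⟩) |
      ⟨s, hs, x, hx, y, hy, z, hz, w, hw, rfl⟩) | ⟨s, hs, x, hx, y, hy, z, hz, rfl⟩) |
      ⟨s, hs, x, hx, y, hy, z, hz, w, hw, rfl⟩) <;>
    rw [SetLike.mem_coe, ← mk_eq_zero_iff] <;>
    simp only [← hπ, map_mul, map_add, hπc]
    · exact g1 s (hSU s hs) _ _
    · exact g2 s (hSU s hs) _ _ _
    · have hm : cm s x ∈ U :=
        U.sub_mem (U.mul_mem_right _ _ (hSU s hs)) (U.mul_mem_left _ _ (hSU s hs))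
      have h := g2 _ hm (π y) (π z) (π w)
      rwa [hπc] at h
    · exact cm_mul_cm_swap (g1 s (hSU s hs)) _ _ _
    · -- Expand `s[xw, z, y]`; the outer terms vanish because `s` and `s x` lie in `U`.
      have e1 := g2 s (hSU s hs) (π x * π w) (π z) (π y)
      have e2 := g2 _ (U.mul_mem_right s x (hSU s hs)) (π w) (π z) (π y)
      have e3 := g2 s (hSU s hs) (π x) (π z) (π y)
      rw [map_mul] at e2
      rw [cm_cm_mul] at e1
      have s1 : cm (π z) (π w) = - cm (π w) (π z) := by simp [cm]
      have s2 : cm (π y) (π w) = - cm (π w) (π y) := by simp [cm]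
      rw [s1, s2]
      linear_combination (norm := noncomm_ring) e2 + e3 * π w - e1
end

section
/- Let R be a unital associative and commutative ring, let A be an associative R-algebra, let n > 2, and let u = [b_1, b_2, ..., b_{n-2}] for some b_1, ..., b_{n-2} ∈ A. Then for all a_1, a_2, a_3 ∈ A, the element 3·u·[a_1, a_2, a_3] belongs to T^{(n)}(A). -/
/-- The left-normed commutator `[a₁, a₂, …, aₙ]` of a nonempty list of ring elements. -/
def commList {A : Type*} [Ring A] : List A → A
  | [] => 0
  | a :: l => l.foldl cm a

/-- `T⁽ⁿ⁾(A)`: the two-sided ideal of `A` generated by all left-normed commutators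
`[a₁, …, aₙ]` of `n` elements of `A`. -/
def Tideal (A : Type*) [Ring A] (n : ℕ) : TwoSidedIdeal A :=
  TwoSidedIdeal.span {x | ∃ a : Fin n → A, x = commList (List.ofFn a)}

section Computation

variable {B : Type*} [Ring B] {v : B}

lemma swap_two (hv : ∀ x y z, cm (cm (cm v x) y) z = 0) (b c x y : B) :
    cm (cm v b) c * cm x y = - (cm (cm v b) x * cm c y) := by
  have h := hv b (x * c) y
  have e : cm (cm (cm v b) (x * c)) y =
      x * cm (cm (cm v b) c) y + cm (cm (cm v b) x) y * c
        - cm (cm (cm v b) c) (cm x y)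
        + (cm (cm v b) c * cm x y + cm (cm v b) x * cm c y) := by
    simp only [cm]; noncomm_ring
  rw [e, hv, hv, hv] at h
  simp only [mul_zero, zero_mul, zero_add, sub_zero] at h
  exact eq_neg_of_add_eq_zero_left h

lemma swap_three (hv : ∀ x y z, cm (cm (cm v x) y) z = 0) (a b c d : B) :
    cm v a * cm (cm b c) d = - (cm v b * cm (cm a c) d) := by
  have h := hv (a * b) c d
  have hcomm : cm (cm v b) (cm (cm a c) d) = 0 := by
    have e : cm (cm v b) (cm (cm a c) d) =
        cm (cm (cm v b) (cm a c)) d - cm (cm (cm v b) d) (cm a c) := by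
      simp only [cm]; noncomm_ring
    rw [e, hv, hv, sub_zero]
  -- The factor `[v, b]` is moved to the left of `[a, c, d]`, and `[a, d]`, `[a, c]` to the right of
  -- `[v, b, c]`, `[v, b, d]`; the correction terms are the three subtracted commutators.
  have e : cm (cm (cm v (a * b)) c) d =
      a * cm (cm (cm v b) c) d + cm (cm (cm v a) c) d * b
        - cm (cm (cm v b) c) (cm a d) - cm (cm (cm v b) d) (cm a c)
        - cm (cm v b) (cm (cm a c) d)
        + (cm (cm v b) c * cm a d + cm (cm v b) d * cm a c)
        + (cm (cm v a) d * cm b c + cm (cm v a) c * cm b d)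
        + (cm v a * cm (cm b c) d + cm v b * cm (cm a c) d) := by
    simp only [cm]; noncomm_ring
  have h₁ : cm (cm v b) c * cm a d + cm (cm v b) d * cm a c = 0 := by
    rw [swap_two hv b c a d, swap_two hv b d a c]
    have e' : cm c d = - cm d c := by simp only [cm]; noncomm_ring
    rw [e']; simp
  have h₂ : cm (cm v a) d * cm b c + cm (cm v a) c * cm b d = 0 := by
    rw [swap_two hv a d b c, swap_two hv a c b d]
    have e' : cm c d = - cm d c := by simp only [cm]; noncomm_ring
    rw [e']; simp
  rw [e, hv, hv, hv, hv, hcomm, h₁, h₂] at h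
  simp only [mul_zero, zero_mul, zero_add, add_zero, sub_zero] at h
  exact eq_neg_of_add_eq_zero_left h

/-- With `swap_three`, the form `G(a; b, c, d) = [v, a] [b, c, d]` is alternating in `a, b, c` and
satisfies the Jacobi identity in `b, c, d`; together these force `3 G = 0`. -/
lemma three_mul_eq_zero (hv : ∀ x y z, cm (cm (cm v x) y) z = 0) (a b c d : B) :
    3 • (cm v a * cm (cm b c) d) = 0 := by
  have alt (a b c d : B) : cm v a * cm (cm b c) d = - (cm v a * cm (cm c b) d) := by
    simp only [cm]; noncomm_ring
  have jac (a b c d : B) : cm v a * cm (cm b c) d + cm v a * cm (cm c d) b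
      + cm v a * cm (cm d b) c = 0 := by
    simp only [cm]; noncomm_ring
  have ja := jac a b c d
  have jb := jac b a c d
  have jc := jac c a b d
  have jd := jac d a b c
  -- Sign changes bring all twelve terms to four, one for each letter in the last slot:
  -- `G(a; b, c, d)`, `G(a; c, d, b)`, `G(a; d, b, c)` and `G(b; c, d, a)`.
  have sw := swap_three hv
  have b₁ := sw b a c d
  have b₂ : cm v b * cm (cm d a) c = - (cm v a * cm (cm d b) c) := by
    rw [alt b d a c, sw b a d c, alt a b d c, neg_neg]
  have c₁ : cm v c * cm (cm a b) d = cm v a * cm (cm b c) d := by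
    rw [sw c a b d, alt a c b d, neg_neg]
  have c₂ : cm v c * cm (cm b d) a = - (cm v b * cm (cm c d) a) := sw c b d a
  have c₃ : cm v c * cm (cm d a) b = cm v a * cm (cm c d) b := by
    rw [alt c d a b, sw c a d b, neg_neg]
  have d₁ : cm v d * cm (cm a b) c = - (cm v a * cm (cm d b) c) := sw d a b c
  have d₂ : cm v d * cm (cm b c) a = cm v b * cm (cm c d) a := by
    rw [sw d b c a, alt b d c a, neg_neg]
  have d₃ : cm v d * cm (cm c a) b = - (cm v a * cm (cm c d) b) := by
    rw [alt d c a b, sw d a c b, alt a d c b, neg_neg]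
  rw [b₁, b₂] at jb
  rw [c₁, c₂, c₃] at jc
  rw [d₁, d₂, d₃] at jd
  -- `3 p` is the combination `ja - jb + jc + 2 jd` of the four Jacobi identities.
  generalize cm v a * cm (cm b c) d = p at *
  generalize cm v a * cm (cm c d) b = q at *
  generalize cm v a * cm (cm d b) c = r at *
  generalize cm v b * cm (cm c d) a = s at *
  have e : 3 • p = (p + q + r) - (-p + s + -r) + (p + -s + q) + 2 • (-r + s + -q) := by abel
  rw [e, ja, jb, jc, jd]
  simp

end Computation

lemma commList_mem {A : Type*} [Ring A] {n : ℕ} (l : List A) (hl : l.length = n) :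
    commList l ∈ Tideal A n := by
  subst hl
  exact TwoSidedIdeal.subset_span ⟨l.get, by rw [List.ofFn_get]⟩

lemma commList_concat {A : Type*} [Ring A] (l : List A) (hl : l ≠ []) (x : A) :
    commList (l ++ [x]) = cm (commList l) x := by
  cases l with
  | nil => exact absurd rfl hl
  | cons a l => simp [commList]

theorem stmt_12 {R A : Type*} [CommRing R] [Ring A] [Algebra R A]
    (n : ℕ) (hn : 2 < n) (b : Fin (n - 2) → A) (u : A)
    (hu : u = commList (List.ofFn b)) :
    ∀ a₁ a₂ a₃ : A,
      3 • (u * cm (cm a₁ a₂) a₃) ∈ Tideal A n := by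
  intro a₁ a₂ a₃
  rcases Nat.lt_or_ge 3 n with h3 | h3
  · obtain ⟨l, w, hl⟩ : ∃ l w, List.ofFn b = l ++ [w] := by
      rcases List.eq_nil_or_concat (List.ofFn b) with h | ⟨l, w, h⟩
      · have := congrArg List.length h
        simp at this
        omega
      · exact ⟨l, w, by simpa using h⟩
    have hlen : l.length = n - 3 := by
      have := congrArg List.length hl
      simp at this
      omega
    have hne : l ≠ [] := by
      rintro rfl
      simp at hlen
      omega
    rw [hl, commList_concat l hne] at hu
    have hmem (x y z : A) : cm (cm (cm (commList l) x) y) z ∈ Tideal A n := by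
      rw [← commList_concat l hne, ← commList_concat _ (by simp), ← commList_concat _ (by simp)]
      exact commList_mem _ (by simp; omega)
    let π := (Tideal A n).ringCon.mk'
    have hπ (x : A) : π x = 0 ↔ x ∈ Tideal A n := by
      rw [← TwoSidedIdeal.mem_ker, TwoSidedIdeal.ker_ringCon_mk']
    have hcm (x y : A) : π (cm x y) = cm (π x) (π y) := by simp [cm]
    have hsurj : Function.Surjective π := RingCon.mk'_surjective _
    rw [← hπ, hu, map_nsmul, map_mul, hcm, hcm, hcm]
    refine three_mul_eq_zero (fun x y z => ?_) _ _ _ _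
    obtain ⟨x, rfl⟩ := hsurj x
    obtain ⟨y, rfl⟩ := hsurj y
    obtain ⟨z, rfl⟩ := hsurj z
    rw [← hcm, ← hcm, ← hcm, hπ]
    exact hmem x y z
  · obtain rfl : n = 3 := by omega
    have h : cm (cm a₁ a₂) a₃ ∈ Tideal A 3 := commList_mem [a₁, a₂, a₃] rfl
    exact nsmul_mem ((Tideal A 3).mul_mem_left _ _ h) 3
end

section
/- Let R be a unital associative and commutative ring, let A be a unital associative R-algebra generated (as a unital R-algebra) by a set X, and let S ⊆ A. Let M = { x_1 ⋯ x_k | k ≥ 0, x_i ∈ X } be the set of all finite products of elements of X (including the empty product 1). Let I be the two-sided ideal of A generated by the following elements, where s ranges over S and x_1, x_2, x_3, x_4, x_5 range over X: [s, x_1, x_2]; s[x_1, x_2, x_3]; [s, x_1][x_2, x_3, x_4]; [s, x_1][x_2, x_3] + [s, x_2][x_1, x_3]; and s([x_1, x_2][x_3, x_4] + [x_1, x_3][x_2, x_4]). Then for all s ∈ S, all d ∈ M, and all x ∈ X, the element [s, d, x] belongs to I. -/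
section

variable {B : Type*} [Ring B] {X : Set B} {s : B}

theorem map_cm {A : Type*} [Ring A] (f : A →+* B) (a b : A) :
    f (cm a b) = cm (f a) (f b) := by
  simp [cm]

/-- `[s, x]` is central with respect to the generators, hence commutes with monomials. -/
theorem cm_mul_comm_of_mem_closure
    (h₁ : ∀ x ∈ X, ∀ y ∈ X, cm (cm s x) y = 0) {x d : B} (hx : x ∈ X)
    (hd : d ∈ Submonoid.closure X) : cm s x * d = d * cm s x := by
  induction hd using Submonoid.closure_induction with
  | mem y hy => exact sub_eq_zero.mp (h₁ x hx y hy)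
  | one => simp
  | mul a b _ _ ha hb => rw [← mul_assoc, ha, mul_assoc, hb, mul_assoc]

/-- The relation `[s, w] [x, y, z] = 0` extends from generators `w` to monomials. -/
theorem cm_cm_mul_cm_eq_zero
    (h₁ : ∀ x ∈ X, ∀ y ∈ X, cm (cm s x) y = 0)
    (h₂ : ∀ w ∈ X, ∀ x ∈ X, ∀ y ∈ X, ∀ z ∈ X, cm s w * cm (cm x y) z = 0)
    {x y z d : B} (hx : x ∈ X) (hy : y ∈ X) (hz : z ∈ X)
    (hd : d ∈ Submonoid.closure X) : cm (cm x y) z * cm s d = 0 := by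
  have hX {u : B} (hu : u ∈ X) := Submonoid.subset_closure hu
  -- `[s, w]` commutes with `x`, `y` and `z`, hence with `[x, y, z]`.
  have gen : ∀ w ∈ X, cm (cm x y) z * cm s w = 0 := by
    intro w hw
    have c {m : B} (hm : m ∈ X) := cm_mul_comm_of_mem_closure h₁ hw (hX hm)
    have h : Commute (cm s w) (cm (cm x y) z) := by
      have cx : Commute (cm s w) x := c hx
      have cy : Commute (cm s w) y := c hy
      have cz : Commute (cm s w) z := c hz
      have cxy : Commute (cm s w) (cm x y) := (cx.mul_right cy).sub_right (cy.mul_right cx)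
      exact (cxy.mul_right cz).sub_right (cz.mul_right cxy)
    rw [← h.eq, h₂ w hw x hx y hy z hz]
  induction hd using Submonoid.closure_induction_right with
  | one => simp [cm]
  | mul_right d hd w hw ih =>
    have e : cm s (d * w) = cm s d * w + cm s w * d := by
      rw [cm_mul_comm_of_mem_closure h₁ hw hd]; simp only [cm]; noncomm_ring
    rw [e, mul_add, ← mul_assoc, ← mul_assoc, ih, gen w hw, zero_mul, zero_mul, add_zero]

/-- The skew-symmetry `[s, y] [z, x] + [s, z] [y, x] = 0`, extended to a monomial in place of `z`. -/
theorem cm_mul_cm_add_cm_mul_cm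
    (h₁ : ∀ x ∈ X, ∀ y ∈ X, cm (cm s x) y = 0)
    (h₂ : ∀ w ∈ X, ∀ x ∈ X, ∀ y ∈ X, ∀ z ∈ X, cm s w * cm (cm x y) z = 0)
    (h₃ : ∀ x ∈ X, ∀ y ∈ X, ∀ z ∈ X, cm s x * cm y z + cm s y * cm x z = 0)
    {x y d : B} (hx : x ∈ X) (hy : y ∈ X)
    (hd : d ∈ Submonoid.closure X) : cm s y * cm d x + cm y x * cm s d = 0 := by
  induction hd using Submonoid.closure_induction_left with
  | one => simp [cm]
  | mul_left z hz e he ih =>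
    have r := cm_cm_mul_cm_eq_zero h₁ h₂ hy hx hz he
    have c (u) (hu : u ∈ X) : Commute (cm s z) u := sub_eq_zero.mp (h₁ z hz u hu)
    have cyx : Commute (cm s z) (cm y x) :=
      ((c y hy).mul_right (c x hx)).sub_right ((c x hx).mul_right (c y hy))
    have t : cm s y * cm (z * e) x + cm y x * cm s (z * e)
        = (cm s y * cm z x + cm s z * cm y x) * e - (cm s z * cm y x - cm y x * cm s z) * e
          + cm (cm s y) z * cm e x + z * (cm s y * cm e x + cm y x * cm s e)
          + cm (cm y x) z * cm s e := by
      simp only [cm]; noncomm_ring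
    rw [t, h₃ y hy z hz x hx, cyx.eq, h₁ y hy z hz, ih, r]
    simp

theorem cm_cm_eq_zero
    (h₁ : ∀ x ∈ X, ∀ y ∈ X, cm (cm s x) y = 0)
    (h₂ : ∀ w ∈ X, ∀ x ∈ X, ∀ y ∈ X, ∀ z ∈ X, cm s w * cm (cm x y) z = 0)
    (h₃ : ∀ x ∈ X, ∀ y ∈ X, ∀ z ∈ X, cm s x * cm y z + cm s y * cm x z = 0)
    {x d : B} (hx : x ∈ X) (hd : d ∈ Submonoid.closure X) : cm (cm s d) x = 0 := by
  induction hd using Submonoid.closure_induction_left with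
  | one => simp [cm]
  | mul_left y hy d hd ih =>
    have t : cm (cm s (y * d)) x = (cm s y * cm d x + cm y x * cm s d)
        + cm (cm s y) x * d + y * cm (cm s d) x := by
      simp only [cm]; noncomm_ring
    rw [t, cm_mul_cm_add_cm_mul_cm h₁ h₂ h₃ hx hy hd, h₁ y hy x hx, ih]
    simp

end

theorem stmt_17 {R A : Type*} [CommRing R] [Ring A] [Algebra R A]
    (X : Set A) (hX : Algebra.adjoin R X = ⊤) (S : Set A)
    (I : TwoSidedIdeal A)
    (hI : I = TwoSidedIdeal.span (
      {a | ∃ s ∈ S, ∃ x₁ ∈ X, ∃ x₂ ∈ X, a = cm (cm s x₁) x₂} ∪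
      {a | ∃ s ∈ S, ∃ x₁ ∈ X, ∃ x₂ ∈ X, ∃ x₃ ∈ X, a = s * cm (cm x₁ x₂) x₃} ∪
      {a | ∃ s ∈ S, ∃ x₁ ∈ X, ∃ x₂ ∈ X, ∃ x₃ ∈ X, ∃ x₄ ∈ X,
        a = cm s x₁ * cm (cm x₂ x₃) x₄} ∪
      {a | ∃ s ∈ S, ∃ x₁ ∈ X, ∃ x₂ ∈ X, ∃ x₃ ∈ X,
        a = cm s x₁ * cm x₂ x₃ + cm s x₂ * cm x₁ x₃} ∪
      {a | ∃ s ∈ S, ∃ x₁ ∈ X, ∃ x₂ ∈ X, ∃ x₃ ∈ X, ∃ x₄ ∈ X,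
        a = s * (cm x₁ x₂ * cm x₃ x₄ + cm x₁ x₃ * cm x₂ x₄)})) :
    ∀ s ∈ S, ∀ d ∈ Submonoid.closure X, ∀ x ∈ X,
      cm (cm s d) x ∈ I := by
  intro s hs d hd x hx
  let f : A →+* I.ringCon.Quotient := I.ringCon.mk'
  have hf (a : A) : f a = 0 ↔ a ∈ I := by
    rw [TwoSidedIdeal.mem_iff, ← RingCon.eq]
    rfl
  have hsub := TwoSidedIdeal.subset_span.trans hI.ge
  rw [← hf, map_cm, map_cm]
  refine cm_cm_eq_zero (X := f '' X) ?_ ?_ ?_ (Set.mem_image_of_mem f hx) ?_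
  · rintro _ ⟨x, hx, rfl⟩ _ ⟨y, hy, rfl⟩
    simp only [← map_cm]
    exact (hf _).mpr (hsub <| .inl <| .inl <| .inl <| .inl ⟨s, hs, x, hx, y, hy, rfl⟩)
  · rintro _ ⟨w, hw, rfl⟩ _ ⟨x, hx, rfl⟩ _ ⟨y, hy, rfl⟩ _ ⟨z, hz, rfl⟩
    simp only [← map_cm, ← map_mul]
    exact (hf _).mpr
      (hsub <| .inl <| .inl <| .inr ⟨s, hs, w, hw, x, hx, y, hy, z, hz, rfl⟩)
  · rintro _ ⟨x, hx, rfl⟩ _ ⟨y, hy, rfl⟩ _ ⟨z, hz, rfl⟩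
    simp only [← map_cm, ← map_mul, ← map_add]
    exact (hf _).mpr (hsub <| .inl <| .inr ⟨s, hs, x, hx, y, hy, z, hz, rfl⟩)
  · have h := Submonoid.mem_map_of_mem (f : A →* I.ringCon.Quotient) hd
    rwa [MonoidHom.map_mclosure] at h
end
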